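/- Let k be a field of characteristic zero, let PGL₂(k) denote the quotient of GL₂(k) by its center, and let n > 2 be an integer. If H₁ and H₂ are subgroups of PGL₂(k) that are both cyclic of order n, then H₁ and H₂ are conjugate in PGL₂(k). -/

import Mathlib

/-- `PGL₂(k)`: the quotient of `GL₂(k)` by its center. -/
abbrev PGL2 (k : Type*) [Field k] :=
  Matrix.GeneralLinearGroup (Fin 2) k ⧸
    Subgroup.center (Matrix.GeneralLinearGroup (Fin 2) k)

namespace Matrix

variable {F K : Type*} [Field F] [Field K]

theorem mem_range_scalar_fin_two_iff (M : Matrix (Fin 2) (Fin 2) F) :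
    M ∈ Set.range (scalar (Fin 2)) ↔ M 0 1 = 0 ∧ M 1 0 = 0 ∧ M 0 0 = M 1 1 := by
  constructor
  · rintro ⟨r, rfl⟩
    simp
  · rintro ⟨h₁, h₂, h₃⟩
    refine ⟨M 0 0, ?_⟩
    ext i j
    fin_cases i <;> fin_cases j <;> simp [h₁, h₂, h₃]

theorem map_mem_range_scalar_fin_two_iff (f : F →+* K) (M : Matrix (Fin 2) (Fin 2) F) :
    M.map f ∈ Set.range (scalar (Fin 2)) ↔ M ∈ Set.range (scalar (Fin 2)) := by
  simp only [mem_range_scalar_fin_two_iff, map_apply, map_eq_zero, f.injective.eq_iff]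

theorem sq_eq_of_trace_det_fin_two {M : Matrix (Fin 2) (Fin 2) F} {a b : F}
    (ht : M.trace = a + b) (hd : M.det = a * b) :
    M * M = (a + b) • M - (a * b) • (1 : Matrix (Fin 2) (Fin 2) F) := by
  rw [← ht, ← hd, trace_fin_two, det_fin_two]
  ext i j
  fin_cases i <;> fin_cases j <;> simp [mul_apply, Fin.sum_univ_two] <;> ring

theorem sub_smul_pow_fin_two {M : Matrix (Fin 2) (Fin 2) F} {a b : F}
    (ht : M.trace = a + b) (hd : M.det = a * b) (m : ℕ) :
    (a - b) • M ^ m =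
      (a ^ m - b ^ m) • M + (a * b ^ m - b * a ^ m) • (1 : Matrix (Fin 2) (Fin 2) F) := by
  induction m with
  | zero => simp
  | succ m ih =>
    rw [pow_succ, ← smul_mul_assoc, ih, add_mul, smul_mul_assoc, smul_mul_assoc, one_mul,
      sq_eq_of_trace_det_fin_two ht hd]
    module

theorem pow_succ_fin_two_of_double_eigenvalue {M : Matrix (Fin 2) (Fin 2) F} {a : F}
    (ht : M.trace = a + a) (hd : M.det = a * a) (m : ℕ) :
    M ^ (m + 1) =
      ((m + 1) * a ^ m) • M - (m * a ^ (m + 1)) • (1 : Matrix (Fin 2) (Fin 2) F) := by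
  induction m with
  | zero => simp
  | succ m ih =>
    rw [pow_succ, ih, sub_mul, smul_mul_assoc, smul_mul_assoc, one_mul,
      sq_eq_of_trace_det_fin_two ht hd]
    push_cast
    module

theorem smul_add_smul_one_mem_range_scalar_iff {M : Matrix (Fin 2) (Fin 2) F}
    (hM : M ∉ Set.range (scalar (Fin 2))) (u v : F) :
    u • M + v • (1 : Matrix (Fin 2) (Fin 2) F) ∈ Set.range (scalar (Fin 2)) ↔ u = 0 := by
  rw [mem_range_scalar_fin_two_iff] at hM ⊢
  by_cases hu : u = 0
  · simp [hu]
  · simpa [hu] using hM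

theorem pow_mem_range_scalar_fin_two_iff {M : Matrix (Fin 2) (Fin 2) F} {a b : F}
    (hM : M ∉ Set.range (scalar (Fin 2))) (hab : a ≠ b)
    (ht : M.trace = a + b) (hd : M.det = a * b) (m : ℕ) :
    M ^ m ∈ Set.range (scalar (Fin 2)) ↔ a ^ m = b ^ m := by
  have h : (a - b) • M ^ m ∈ Set.range (scalar (Fin 2)) ↔
      M ^ m ∈ Set.range (scalar (Fin 2)) := by
    simp only [mem_range_scalar_fin_two_iff, smul_apply, smul_eq_mul, mul_eq_zero,
      mul_right_inj' (sub_ne_zero.mpr hab), sub_ne_zero.mpr hab, false_or]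
  rw [← h, sub_smul_pow_fin_two ht hd, smul_add_smul_one_mem_range_scalar_iff hM, sub_eq_zero]

theorem pow_succ_notMem_range_scalar_fin_two [CharZero F] {M : Matrix (Fin 2) (Fin 2) F} {a : F}
    (hM : M ∉ Set.range (scalar (Fin 2))) (ha : a ≠ 0)
    (ht : M.trace = a + a) (hd : M.det = a * a) (m : ℕ) :
    M ^ (m + 1) ∉ Set.range (scalar (Fin 2)) := by
  rw [pow_succ_fin_two_of_double_eigenvalue ht hd, sub_eq_add_neg, ← neg_smul,
    smul_add_smul_one_mem_range_scalar_iff hM]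
  exact mul_ne_zero (by exact_mod_cast m.succ_ne_zero) (pow_ne_zero m ha)

theorem trace_pow_fin_two {M : Matrix (Fin 2) (Fin 2) F} {a b : F} (hab : a ≠ b)
    (ht : M.trace = a + b) (hd : M.det = a * b) (m : ℕ) :
    (M ^ m).trace = a ^ m + b ^ m := by
  have h := congrArg trace (sub_smul_pow_fin_two ht hd m)
  simp only [trace_smul, trace_add, smul_eq_mul, ht, trace_one, Fintype.card_fin] at h
  apply mul_left_cancel₀ (sub_ne_zero.mpr hab)
  rw [h]
  push_cast
  ring

theorem exists_add_mul_eq_of_isAlgClosed [IsAlgClosed F] (t d : F) :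
    ∃ a b : F, t = a + b ∧ d = a * b := by
  obtain ⟨a, ha⟩ := IsAlgClosed.exists_root
    (Polynomial.X ^ 2 - Polynomial.C t * Polynomial.X + Polynomial.C d) (by
      have : (Polynomial.X ^ 2 - Polynomial.C t * Polynomial.X + Polynomial.C d).degree = 2 := by
        compute_degree!
      simp [this])
  refine ⟨a, t - a, by ring, ?_⟩
  simp [Polynomial.IsRoot] at ha
  linear_combination ha

namespace GeneralLinearGroup

/-- A non-scalar `2 × 2` matrix is conjugate to its companion matrix. -/
theorem exists_mul_eq_mul_companion {M : Matrix (Fin 2) (Fin 2) F}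
    (hM : M ∉ Set.range (Matrix.scalar (Fin 2))) :
    ∃ P : GL (Fin 2) F, M * P.val = P.val * !![0, -M.det; 1, M.trace] := by
  have key (v w : F) (h : v * (M 1 0 * v + M 1 1 * w) - (M 0 0 * v + M 0 1 * w) * w ≠ 0) :
      ∃ P : GL (Fin 2) F, M * P.val = P.val * !![0, -M.det; 1, M.trace] := by
    refine ⟨mkOfDetNeZero !![v, M 0 0 * v + M 0 1 * w; w, M 1 0 * v + M 1 1 * w]
      (by rwa [det_fin_two_of]), ?_⟩
    rw [trace_fin_two, M.det_fin_two]
    ext i j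
    fin_cases i <;> fin_cases j <;>
      simp [mkOfDetNeZero, mul_apply, Fin.sum_univ_two] <;> ring
  rw [mem_range_scalar_fin_two_iff] at hM
  by_cases h₁ : M 1 0 = 0
  · by_cases h₂ : M 0 1 = 0
    · refine key 1 1 fun h => hM ⟨h₂, h₁, ?_⟩
      linear_combination h₁ - h₂ - h
    · exact key 0 1 (by simpa using h₂)
  · exact key 1 0 (by simpa using h₁)

theorem isConj_of_trace_eq_of_det_eq {A B : GL (Fin 2) F}
    (hA : A.val ∉ Set.range (Matrix.scalar (Fin 2))) (hB : B.val ∉ Set.range (Matrix.scalar (Fin 2)))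
    (ht : A.val.trace = B.val.trace) (hd : A.val.det = B.val.det) : IsConj A B := by
  obtain ⟨P, hP⟩ := exists_mul_eq_mul_companion hA
  obtain ⟨Q, hQ⟩ := exists_mul_eq_mul_companion hB
  rw [← ht, ← hd] at hQ
  rw [isConj_iff]
  refine ⟨Q * P⁻¹, ?_⟩
  have h₁ : P⁻¹.val * A.val * P.val = !![0, -A.val.det; 1, A.val.trace] := by
    rw [mul_assoc, hP, ← mul_assoc, Units.inv_mul, one_mul]
  have h₂ : Q⁻¹.val * B.val * Q.val = !![0, -A.val.det; 1, A.val.trace] := by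
    rw [mul_assoc, hQ, ← mul_assoc, Units.inv_mul, one_mul]
  have h : P⁻¹ * A * P = Q⁻¹ * B * Q := Units.ext (h₁.trans h₂.symm)
  calc Q * P⁻¹ * A * (Q * P⁻¹)⁻¹ = Q * (P⁻¹ * A * P) * Q⁻¹ := by group
    _ = B := by rw [h]; group

end GeneralLinearGroup

end Matrix

open Matrix

namespace PGL2

variable {k : Type*} [Field k]

theorem coe_eq_one_iff (g : GL (Fin 2) k) :
    (g : PGL2 k) = 1 ↔ g.val ∈ Set.range (scalar (Fin 2)) := by
  rw [QuotientGroup.eq_one_iff, GeneralLinearGroup.mem_center_iff_val_mem_range_scalar]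

theorem coe_pow_eq_one_iff (g : GL (Fin 2) k) (m : ℕ) :
    (g : PGL2 k) ^ m = 1 ↔ g.val ^ m ∈ Set.range (scalar (Fin 2)) := by
  rw [← QuotientGroup.mk_pow, coe_eq_one_iff, Units.val_pow_eq_pow_val]

/-- The eigenvalues of a matrix whose image in `PGL₂` is nontrivial of finite order are distinct,
and their ratio has the same order as that image. -/
theorem exists_eigenvalues [CharZero k] {K : Type*} [Field K] [IsAlgClosed K] (f : k →+* K)
    (g : GL (Fin 2) k) (hfin : IsOfFinOrder (g : PGL2 k)) (hg : (g : PGL2 k) ≠ 1) :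
    ∃ a b : K, a ≠ 0 ∧ b ≠ 0 ∧ orderOf (a / b) = orderOf (g : PGL2 k) ∧
      ∀ m : ℕ, f (g.val ^ m).trace = a ^ m + b ^ m ∧ f (g.val ^ m).det = a ^ m * b ^ m := by
  have : CharZero K := charZero_of_injective_ringHom f.injective
  obtain ⟨a, b, ht, hd⟩ := exists_add_mul_eq_of_isAlgClosed (f g.val.trace) (f g.val.det)
  have hdet : f g.val.det ≠ 0 := by
    rw [Ne, map_eq_zero]
    exact ((isUnit_iff_isUnit_det _).mp g.isUnit).ne_zero
  have ha : a ≠ 0 := left_ne_zero_of_mul (hd ▸ hdet)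
  have hb : b ≠ 0 := right_ne_zero_of_mul (hd ▸ hdet)
  rw [Ne, coe_eq_one_iff, ← map_mem_range_scalar_fin_two_iff f] at hg
  have hpow (m : ℕ) : (g.val ^ m).map f = (g.val.map f) ^ m := map_pow f.mapMatrix g.val m
  have htr (M : Matrix (Fin 2) (Fin 2) k) : (M.map f).trace = f M.trace :=
    (AddMonoidHom.map_trace f M).symm
  have hdt (M : Matrix (Fin 2) (Fin 2) k) : (M.map f).det = f M.det := (f.map_det M).symm
  have ht' : (g.val.map f).trace = a + b := by rw [htr, ht]
  have hd' : (g.val.map f).det = a * b := by rw [hdt, hd]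
  have hab : a ≠ b := by
    rintro rfl
    obtain ⟨m, hm, h⟩ := isOfFinOrder_iff_pow_eq_one.mp hfin
    obtain ⟨m, rfl⟩ := Nat.exists_eq_add_of_lt hm
    rw [coe_pow_eq_one_iff, ← map_mem_range_scalar_fin_two_iff f, hpow, zero_add] at h
    exact pow_succ_notMem_range_scalar_fin_two hg ha ht' hd' m h
  refine ⟨a, b, ha, hb, orderOf_eq_orderOf_iff.mpr fun m => ?_, fun m => ⟨?_, ?_⟩⟩
  · rw [coe_pow_eq_one_iff, ← map_mem_range_scalar_fin_two_iff f, hpow,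
      pow_mem_range_scalar_fin_two_iff hg hab ht' hd', div_pow, div_eq_one_iff_eq (pow_ne_zero m hb)]
  · rw [← htr, hpow, trace_pow_fin_two hab ht' hd']
  · rw [det_pow, map_pow, hd, mul_pow]

/-- The image in `PGL₂(k)` of a non-scalar matrix is determined up to conjugacy by the invariant
`trace² / det`, provided that it is nonzero. -/
theorem isConj_of_trace_sq_mul_det_eq {A B : GL (Fin 2) k}
    (hA : (A : PGL2 k) ≠ 1) (hB : (B : PGL2 k) ≠ 1)
    (htA : A.val.trace ≠ 0) (htB : B.val.trace ≠ 0)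
    (h : A.val.trace ^ 2 * B.val.det = B.val.trace ^ 2 * A.val.det) :
    IsConj (A : PGL2 k) (B : PGL2 k) := by
  let s : kˣ := Units.mk0 (A.val.trace / B.val.trace) (div_ne_zero htA htB)
  have hs : (s : k) = A.val.trace / B.val.trace := rfl
  let z : GL (Fin 2) k := Units.map (scalar (Fin 2)).toMonoidHom s
  have hz : z.val = scalar (Fin 2) (s : k) := rfl
  have hzB : (z * B).val = (s : k) • B.val := by
    rw [Units.val_mul, hz, scalar_apply, ← smul_eq_diagonal_mul]
  have hcoe : ((z * B : GL (Fin 2) k) : PGL2 k) = B := by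
    rw [QuotientGroup.mk_mul, (coe_eq_one_iff z).mpr ⟨s, hz.symm⟩, one_mul]
  rw [← hcoe] at hB ⊢
  refine (QuotientGroup.mk' (Subgroup.center (GL (Fin 2) k))).map_isConj
    (GeneralLinearGroup.isConj_of_trace_eq_of_det_eq (mt (coe_eq_one_iff A).mpr hA)
      (mt (coe_eq_one_iff _).mpr hB) ?_ ?_)
  · rw [hzB, trace_smul, smul_eq_mul, hs, div_mul_cancel₀ _ htB]
  · rw [hzB, det_smul, Fintype.card_fin, hs]
    field_simp
    linear_combination -h

/-- Elements of the same finite order `n > 2` in `PGL₂(k)` are conjugate up to replacing one of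
them by a coprime power. -/
theorem exists_coprime_isConj_pow [CharZero k] {x y : PGL2 k} (hx : 2 < orderOf x)
    (hxy : orderOf x = orderOf y) :
    ∃ j : ℕ, (orderOf x).Coprime j ∧ IsConj (x ^ j) y := by
  obtain ⟨A, rfl⟩ := QuotientGroup.mk_surjective x
  obtain ⟨B, rfl⟩ := QuotientGroup.mk_surjective y
  set n := orderOf (A : PGL2 k) with hn
  have ne_one {z : PGL2 k} (hz : orderOf z = n) : z ≠ 1 := by
    rintro rfl
    rw [orderOf_one] at hz
    omega
  have fin {z : PGL2 k} (hz : orderOf z = n) : IsOfFinOrder z :=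
    orderOf_pos_iff.mp (by omega)
  let f := algebraMap k (AlgebraicClosure k)
  obtain ⟨a, b, ha, hb, hab, hA⟩ := exists_eigenvalues f A (fin rfl) (ne_one rfl)
  obtain ⟨c, d, hc, hd, hcd, hB⟩ := exists_eigenvalues f B (fin hxy.symm) (ne_one hxy.symm)
  have : NeZero n := ⟨by omega⟩
  have hprim : IsPrimitiveRoot (a / b) n := hn ▸ hab ▸ IsPrimitiveRoot.orderOf _
  have hprim' : IsPrimitiveRoot (c / d) n := hxy ▸ hcd ▸ IsPrimitiveRoot.orderOf _
  obtain ⟨j, -, hj, hjr⟩ := hprim.isPrimitiveRoot_iff.mp hprim'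
  refine ⟨j, hj.symm, ?_⟩
  have hratio : a ^ j * d = c * b ^ j := by
    rwa [div_pow, div_eq_div_iff (pow_ne_zero j hb) hd] at hjr
  have hcd0 : c + d ≠ 0 := by
    intro h
    refine hprim'.pow_ne_one_of_pos_of_lt two_ne_zero hx ?_
    rw [eq_neg_of_add_eq_zero_left h, neg_div, div_self hd, neg_one_sq]
  have hab0 : a ^ j + b ^ j ≠ 0 := by
    intro h
    refine mul_ne_zero (pow_ne_zero j hb) hcd0 ?_
    linear_combination d * h - hratio
  obtain ⟨htA, hdA⟩ := hA j
  obtain ⟨htB, hdB⟩ := hB 1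
  simp only [pow_one] at htB hdB
  have hord : orderOf ((A : PGL2 k) ^ j) = n := Nat.Coprime.orderOf_pow hj.symm
  rw [← QuotientGroup.mk_pow] at hord ⊢
  refine isConj_of_trace_sq_mul_det_eq (ne_one hord) (ne_one hxy.symm) ?_ ?_ ?_
  · rw [Units.val_pow_eq_pow_val, ← map_ne_zero f, htA]
    exact hab0
  · rw [← map_ne_zero f, htB]
    exact hcd0
  · apply f.injective
    rw [Units.val_pow_eq_pow_val, map_mul, map_mul, map_pow, map_pow, htA, hdA, htB, hdB]
    linear_combination (a ^ j * c - b ^ j * d) * hratio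

end PGL2

/-- Let `k` be a field of characteristic zero and `n > 2`.
Any two cyclic subgroups of `PGL₂(k)` of order `n` are conjugate. -/
theorem pgl2_cyclic_subgroups_conjugate (k : Type*) [Field k] [CharZero k]
    (n : ℕ) (hn : 2 < n) (H₁ H₂ : Subgroup (PGL2 k))
    (h₁card : Nat.card H₁ = n) (h₁cyc : IsCyclic H₁)
    (h₂card : Nat.card H₂ = n) (h₂cyc : IsCyclic H₂) :
    ∃ g : PGL2 k, Subgroup.map (MulAut.conj g).toMonoidHom H₁ = H₂ := by
  obtain ⟨x, rfl⟩ := H₁.isCyclic_iff_exists_zpowers_eq_top.mp h₁cyc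
  obtain ⟨y, rfl⟩ := H₂.isCyclic_iff_exists_zpowers_eq_top.mp h₂cyc
  rw [Nat.card_zpowers] at h₁card h₂card
  obtain ⟨j, hj, hconj⟩ :=
    PGL2.exists_coprime_isConj_pow (h₁card ▸ hn) (h₁card.trans h₂card.symm)
  obtain ⟨g, hg⟩ := isConj_iff.mp hconj
  obtain ⟨m, hm⟩ := exists_pow_eq_self_of_coprime hj.symm
  have hx : Subgroup.zpowers x = Subgroup.zpowers (x ^ j) := by
    refine le_antisymm ?_ ?_ <;> rw [Subgroup.zpowers_le]
    · exact Subgroup.mem_zpowers_iff.mpr ⟨m, by rw [zpow_natCast, hm]⟩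
    · exact Subgroup.npow_mem_zpowers x j
  refine ⟨g, ?_⟩
  rw [hx, MonoidHom.map_zpowers]
  congr 1
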